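/- arXiv:2601.16966 — 3 statements merged into one kernel-verified Lean document; each statement's English description precedes it below -/
import Mathlib

section
/- Let n ≥ 3 and 1 ≤ k ≤ n-2 be integers. For every α ∈ [2-n, 0], the function g_{n,k,α}(t) := ₂F₁((n+α-2)/2, -α/2; k/2; t²) is strictly positive for every t ∈ [0,1). -/
/-!
On the given range of `α` the upper parameters `(n+α-2)/2` and `-α/2` are nonnegative and the lower
parameter `k/2` is positive, so every Taylor coefficient is nonnegative, and the constant term is
`1`. The series converges on `[0,1)` by the ratio test (`summable_hyp2F1`), so its sum is at least
its constant term.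
-/

/-- The Gauss hypergeometric function `₂F₁(a,b;c;s)`, defined by its power series. -/
noncomputable def hyp2F1 (a b c s : ℝ) : ℝ :=
  ∑' m : ℕ, ((ascPochhammer ℝ m).eval a * (ascPochhammer ℝ m).eval b)
    / ((ascPochhammer ℝ m).eval c * (m.factorial : ℝ)) * s ^ m

/-- `g_{n,k,α}(t) := ₂F₁((n+α-2)/2, -α/2; k/2; t²)`. -/
noncomputable def gnk (n k : ℕ) (α t : ℝ) : ℝ :=
  hyp2F1 (((n : ℝ) + α - 2) / 2) (-α / 2) ((k : ℝ) / 2) (t ^ 2)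

/-- The ratio of consecutive terms tends to `s < 1`. The ratio test is used in its inequality form
because the terms vanish from index `1` on when `a = 0` or `b = 0`. -/
theorem summable_hyp2F1 {a b c s : ℝ} (ha : 0 ≤ a) (hb : 0 ≤ b) (hc : 0 < c)
    (hs0 : 0 ≤ s) (hs1 : s < 1) :
    Summable fun m : ℕ => ((ascPochhammer ℝ m).eval a * (ascPochhammer ℝ m).eval b)
      / ((ascPochhammer ℝ m).eval c * (m.factorial : ℝ)) * s ^ m := by
  have hlim : Filter.Tendsto
      (fun m : ℕ => ((a + 1 * m) / (c + 1 * m)) * ((b + 1 * m) / (1 + 1 * m)) * s)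
      Filter.atTop (nhds (1 / 1 * (1 / 1) * s)) :=
    ((tendsto_add_mul_div_add_mul_atTop_nhds a c 1 one_ne_zero).mul
      (tendsto_add_mul_div_add_mul_atTop_nhds b 1 1 one_ne_zero)).mul_const s
  obtain ⟨r, hsr, hr1⟩ := exists_between hs1
  refine summable_of_ratio_norm_eventually_le hr1 ?_
  filter_upwards [hlim.eventually (gt_mem_nhds (by simpa using hsr))] with m hm
  have hcm : 0 < (ascPochhammer ℝ m).eval c := ascPochhammer_pos m c hc
  have hf : (0 : ℝ) < m.factorial := by positivity
  have hcm' : 0 < c + m := by positivity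
  have hq : 0 ≤ ((a + 1 * m) / (c + 1 * m)) * ((b + 1 * m) / (1 + 1 * m)) * s := by positivity
  have key : ((ascPochhammer ℝ (m + 1)).eval a * (ascPochhammer ℝ (m + 1)).eval b)
      / ((ascPochhammer ℝ (m + 1)).eval c * ((m + 1).factorial : ℝ)) * s ^ (m + 1)
      = (((a + 1 * m) / (c + 1 * m)) * ((b + 1 * m) / (1 + 1 * m)) * s)
        * (((ascPochhammer ℝ m).eval a * (ascPochhammer ℝ m).eval b)
      / ((ascPochhammer ℝ m).eval c * (m.factorial : ℝ)) * s ^ m) := by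
    have h1 : (1 : ℝ) + m ≠ 0 := by positivity
    have h2 : (m : ℝ) + 1 ≠ 0 := by positivity
    rw [ascPochhammer_succ_eval, ascPochhammer_succ_eval, ascPochhammer_succ_eval,
      Nat.factorial_succ]
    push_cast
    simp only [one_mul]
    field_simp
    ring
  rw [key, norm_mul, Real.norm_of_nonneg hq]
  exact mul_le_mul_of_nonneg_right hm.le (norm_nonneg _)

/-- For `n ≥ 3`, `1 ≤ k ≤ n-2`, and every `α ∈ [2-n, 0]`, the function
`g_{n,k,α}` is strictly positive on `[0,1)`. -/
theorem gnk_positive (n k : ℕ) (hn : 3 ≤ n) (hk1 : 1 ≤ k) (hk2 : k ≤ n - 2) :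
    ∀ α ∈ Set.Icc (2 - (n : ℝ)) 0, ∀ t ∈ Set.Ico (0 : ℝ) 1, 0 < gnk n k α t := by
  rintro α ⟨hα1, hα2⟩ t ⟨ht0, ht1⟩
  have ha : 0 ≤ ((n : ℝ) + α - 2) / 2 := by linarith
  have hb : 0 ≤ -α / 2 := by linarith
  have hc : 0 < (k : ℝ) / 2 := by
    have : (0 : ℝ) < k := by exact_mod_cast hk1
    positivity
  have hpoch : ∀ (m : ℕ) {x : ℝ}, 0 ≤ x → 0 ≤ (ascPochhammer ℝ m).eval x := by
    intro m x hx
    induction m with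
    | zero => simp
    | succ m ih =>
      rw [ascPochhammer_succ_eval]
      positivity
  refine (summable_hyp2F1 ha hb hc (sq_nonneg t) (by nlinarith)).tsum_pos (fun m => ?_) 0 (by simp)
  have h1 := hpoch m ha
  have h2 := hpoch m hb
  have h3 := hpoch m hc.le
  positivity
end

section
/- Let n ≥ 3 and 1 ≤ k ≤ n-2 be integers and let α ∈ (2-n, 0), so that g := g_{n,k,α} is strictly positive on [0,1). Then the limit lim_{t→1⁻} (1-t²)·g'(t)/g(t) exists and equals n-k-2. (In particular the limit is 0 when k = n-2.) -/
open Filter Topology Set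

/-- The coefficient of `s ^ m` in `₂F₁(a,b;c;s)`. -/
noncomputable def hypCoeff (a b c : ℝ) (m : ℕ) : ℝ :=
  ((ascPochhammer ℝ m).eval a * (ascPochhammer ℝ m).eval b)
    / ((ascPochhammer ℝ m).eval c * (m.factorial : ℝ))

lemma hypCoeff_pos {a b c : ℝ} (ha : 0 < a) (hb : 0 < b) (hc : 0 < c) (m : ℕ) :
    0 < hypCoeff a b c m := by
  have h1 := ascPochhammer_pos m a ha
  have h2 := ascPochhammer_pos m b hb
  have h3 := ascPochhammer_pos m c hc
  unfold hypCoeff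
  positivity

lemma hypCoeff_succ {a b c : ℝ} (hc : 0 < c) (m : ℕ) :
    (m + 1) * hypCoeff a b c (m + 1)
      = (a + m) * (b + m) / (c + m) * hypCoeff a b c m := by
  have h3 := (ascPochhammer_pos m c hc).ne'
  have h4 : c + m ≠ 0 := by positivity
  unfold hypCoeff
  rw [ascPochhammer_succ_eval, ascPochhammer_succ_eval, ascPochhammer_succ_eval,
    Nat.factorial_succ]
  push_cast
  field_simp

/-- The `m`-th coefficient of `(1-s) F'(s)`. -/
lemma hypCoeff_diff {a b c : ℝ} (hc : 0 < c) (m : ℕ) :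
    (m + 1) * hypCoeff a b c (m + 1) - m * hypCoeff a b c m
      = (a + b - c) * hypCoeff a b c m
        + (a * b - c * (a + b - c)) / (c + m) * hypCoeff a b c m := by
  have h4 : c + m ≠ 0 := by positivity
  rw [hypCoeff_succ hc]
  field_simp
  ring

lemma hypCoeff_not_summable {a b c : ℝ} (ha : 0 < a) (hb : 0 < b) (hc : 0 < c)
    (hδ : 0 ≤ a + b - c) : ¬ Summable (hypCoeff a b c) := by
  have hpos := hypCoeff_pos ha hb hc
  have hlow : ∀ m : ℕ, hypCoeff a b c 1 ≤ (m + 1) * hypCoeff a b c (m + 1) := by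
    intro m
    induction m with
    | zero => simp
    | succ m ih =>
      refine ih.trans ?_
      have h := hypCoeff_succ (a := a) (b := b) hc (m + 1)
      have hm := hpos (m + 1)
      push_cast at h ⊢
      rw [h]
      refine mul_le_mul_of_nonneg_right ?_ hm.le
      rw [le_div_iff₀ (by positivity)]
      nlinarith [mul_pos ha hb, mul_nonneg hδ (by positivity : (0 : ℝ) ≤ m + 1)]
  intro hs
  have h1 := (summable_nat_add_iff 1).2 hs
  have h2 : Summable (fun m : ℕ => hypCoeff a b c 1 * (1 / ((m + 1 : ℕ) : ℝ))) := by
    refine Summable.of_nonneg_of_le (fun m => ?_) (fun m => ?_) h1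
    · have := hpos 1
      positivity
    · rw [mul_one_div, div_le_iff₀ (by positivity)]
      have := hlow m
      push_cast
      linarith
  rw [summable_mul_left_iff (hpos 1).ne'] at h2
  exact Real.not_summable_one_div_natCast ((summable_nat_add_iff 1).1 h2)

lemma summable_deriv_coeff {a b c : ℝ} (ha : 0 < a) (hb : 0 < b) (hc : 0 < c)
    {s : ℝ} (hs : s ∈ Ioo (0 : ℝ) 1) :
    Summable (fun m : ℕ => ((m : ℝ) + 1) * hypCoeff a b c (m + 1) * s ^ m) := by
  have hpos := hypCoeff_pos ha hb hc
  have hs0 := hs.1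
  have hp : ∀ m : ℕ, 0 < ((m : ℝ) + 1) * hypCoeff a b c (m + 1) * s ^ m := fun m => by
    have := hpos (m + 1)
    positivity
  refine summable_of_ratio_test_tendsto_lt_one hs.2 (Eventually.of_forall fun m => (hp m).ne') ?_
  have hinf : ∀ x : ℝ, Tendsto (fun m : ℕ => x + ((m : ℝ) + 1)) atTop atTop := fun x =>
    tendsto_atTop_add_const_left _ _
      (tendsto_atTop_add_const_right _ _ tendsto_natCast_atTop_atTop)
  have h1 : Tendsto (fun m : ℕ => 1 + a / (0 + ((m : ℝ) + 1))) atTop (𝓝 (1 + 0)) :=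
    ((hinf 0).const_div_atTop a).const_add 1
  have h2 : Tendsto (fun m : ℕ => 1 + (b - c) / (c + ((m : ℝ) + 1))) atTop (𝓝 (1 + 0)) :=
    ((hinf c).const_div_atTop (b - c)).const_add 1
  have h3 := (h1.mul h2).mul_const s
  simp only [add_zero, one_mul] at h3
  refine h3.congr fun m => ?_
  rw [Real.norm_of_nonneg (hp m).le, Real.norm_of_nonneg (hp (m + 1)).le]
  have h := hypCoeff_succ (a := a) (b := b) hc (m + 1)
  have hm := (hpos (m + 1)).ne'
  have hcm : c + ((m : ℝ) + 1) ≠ 0 := by positivity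
  push_cast at h ⊢
  rw [h, pow_succ]
  field_simp
  ring

lemma summable_coeff {a b c : ℝ} (ha : 0 < a) (hb : 0 < b) (hc : 0 < c)
    {s : ℝ} (hs : s ∈ Ioo (0 : ℝ) 1) :
    Summable (fun m : ℕ => hypCoeff a b c m * s ^ m) := by
  have hpos := hypCoeff_pos ha hb hc
  have hs0 := hs.1
  refine (summable_nat_add_iff 1).1 (Summable.of_nonneg_of_le (fun m => ?_) (fun m => ?_)
    (summable_deriv_coeff ha hb hc hs))
  · have := hpos (m + 1)
    positivity
  · have := hpos (m + 1)
    have h1 : s ^ (m + 1) ≤ s ^ m := pow_le_pow_of_le_one hs.1.le hs.2.le (Nat.le_succ m)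
    have h2 : (1 : ℝ) ≤ m + 1 := by linarith [(Nat.cast_nonneg m : (0 : ℝ) ≤ m)]
    calc hypCoeff a b c (m + 1) * s ^ (m + 1) ≤ 1 * hypCoeff a b c (m + 1) * s ^ m := by
          rw [one_mul]; gcongr
      _ ≤ _ := by gcongr

/-- A power series with nonnegative coefficients of divergent sum blows up at `1⁻`. -/
lemma tendsto_atTop_of_not_summable {u : ℕ → ℝ} (hu : ∀ m, 0 ≤ u m)
    (hs : ∀ s ∈ Ioo (0 : ℝ) 1, Summable (fun m => u m * s ^ m)) (hns : ¬ Summable u) :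
    Tendsto (fun s : ℝ => ∑' m, u m * s ^ m) (𝓝[Ioo 0 1] 1) atTop := by
  rw [tendsto_atTop]
  intro M
  have h1 := (not_summable_iff_tendsto_nat_atTop_of_nonneg hu).1 hns
  obtain ⟨N, hN⟩ := (h1.eventually_gt_atTop M).exists
  have hc : Tendsto (fun s : ℝ => ∑ m ∈ Finset.range N, u m * s ^ m) (𝓝[Ioo 0 1] 1)
      (𝓝 (∑ m ∈ Finset.range N, u m * 1 ^ m)) :=
    ((by fun_prop : Continuous fun s : ℝ => ∑ m ∈ Finset.range N, u m * s ^ m).tendsto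
      1).mono_left nhdsWithin_le_nhds
  simp only [one_pow, mul_one] at hc
  filter_upwards [hc.eventually (lt_mem_nhds hN), self_mem_nhdsWithin] with s h1 h2
  exact h1.le.trans ((hs s h2).sum_le_tsum _
    fun m _ => mul_nonneg (hu m) (pow_nonneg h2.1.le m))

/-- Abelian theorem: multiplying the coefficients of a divergent nonnegative series by a null sequence
makes the power series negligible at `1⁻`. -/
lemma abel_ratio {u e : ℕ → ℝ} (hu : ∀ m, 0 ≤ u m) (he : Tendsto e atTop (𝓝 0))
    (hs : ∀ s ∈ Ioo (0 : ℝ) 1, Summable (fun m => u m * s ^ m)) (hns : ¬ Summable u) :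
    Tendsto (fun s : ℝ => (∑' m, e m * u m * s ^ m) / ∑' m, u m * s ^ m)
      (𝓝[Ioo 0 1] 1) (𝓝 0) := by
  rw [Metric.tendsto_nhds]
  intro ε hε
  obtain ⟨N, hN⟩ := (Metric.tendsto_atTop.1 he) (ε / 2) (by positivity)
  set C := ∑ m ∈ Finset.range N, |e m| * u m with hC
  have hF := tendsto_atTop_of_not_summable hu hs hns
  filter_upwards [hF.eventually_gt_atTop 0, hF.eventually_gt_atTop (2 * C / ε),
    self_mem_nhdsWithin] with s h0 h1 h2
  have hsum : HasSum (fun m => (if m ∈ Finset.range N then |e m| * u m else 0)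
      + ε / 2 * (u m * s ^ m)) (C + ε / 2 * ∑' m, u m * s ^ m) := by
    refine HasSum.add ?_ ((hs s h2).hasSum.mul_left _)
    rw [hC, Finset.sum_congr rfl (g := fun m =>
      if m ∈ Finset.range N then |e m| * u m else 0) (fun m hm => by simp only [if_pos hm])]
    exact hasSum_sum_of_ne_finset_zero fun m hm => if_neg hm
  have hb : ‖∑' m, e m * u m * s ^ m‖ ≤ C + ε / 2 * ∑' m, u m * s ^ m := by
    refine tsum_of_norm_bounded hsum fun m => ?_
    have hsm : 0 ≤ s ^ m := pow_nonneg h2.1.le m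
    have hum := hu m
    rw [norm_mul, norm_mul, Real.norm_of_nonneg hum, Real.norm_of_nonneg hsm, Real.norm_eq_abs]
    split_ifs with hm
    · have : |e m| * u m * s ^ m ≤ |e m| * u m * 1 := by
        gcongr
        exact pow_le_one₀ h2.1.le h2.2.le
      have : 0 ≤ ε / 2 * (u m * s ^ m) := by positivity
      linarith
    · have h3 := hN m (by simpa using hm)
      rw [Real.dist_eq, sub_zero] at h3
      rw [zero_add, mul_assoc]
      gcongr
  rw [Real.dist_eq, sub_zero, abs_div, abs_of_pos h0, div_lt_iff₀ h0]
  rw [div_lt_iff₀ hε] at h1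
  rw [Real.norm_eq_abs] at hb
  linarith

lemma hyp_hasDerivAt {a b c : ℝ} (ha : 0 < a) (hb : 0 < b) (hc : 0 < c)
    {s : ℝ} (hs : s ∈ Ioo (0 : ℝ) 1) :
    ∃ D, HasDerivAt (hyp2F1 a b c) D s ∧
      (1 - s) * D = (a + b - c) * hyp2F1 a b c s
        + ∑' m : ℕ, (a * b - c * (a + b - c)) / (c + m) * hypCoeff a b c m * s ^ m := by
  have hpos := hypCoeff_pos ha hb hc
  have hder : ∀ r ∈ Ioo (0 : ℝ) 1,
      Summable (fun m : ℕ => hypCoeff a b c m * (m * r ^ (m - 1))) := fun r hr => by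
    refine (summable_nat_add_iff 1).1 ((summable_deriv_coeff ha hb hc hr).congr fun m => ?_)
    push_cast
    ring
  have hrs : s < (1 + s) / 2 := by linarith [hs.2]
  have hr : (1 + s) / 2 ∈ Ioo (0 : ℝ) 1 := ⟨by linarith [hs.1], by linarith [hs.2]⟩
  refine ⟨∑' m : ℕ, hypCoeff a b c m * (m * s ^ (m - 1)), ?_, ?_⟩
  · refine hasDerivAt_tsum_of_isPreconnected (g := fun m y => hypCoeff a b c m * y ^ m)
      (g' := fun m y => hypCoeff a b c m * (m * y ^ (m - 1)))
      (t := Ioo 0 ((1 + s) / 2)) (y₀ := s) (hder _ hr) isOpen_Ioo isPreconnected_Ioo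
      (fun m y _ => (hasDerivAt_pow m y).const_mul _) (fun m y hy => ?_) ⟨hs.1, hrs⟩
      (summable_coeff ha hb hc hs) ⟨hs.1, hrs⟩
    have h0 := hy.1
    have hm := hpos m
    rw [Real.norm_of_nonneg (by positivity)]
    have := hy.2.le
    gcongr
  · have hv := summable_deriv_coeff ha hb hc hs
    have hD : ∑' m : ℕ, hypCoeff a b c m * (m * s ^ (m - 1))
        = ∑' m : ℕ, ((m : ℝ) + 1) * hypCoeff a b c (m + 1) * s ^ m := by
      rw [(hder s hs).tsum_eq_zero_add]
      simp only [Nat.cast_zero, zero_mul, mul_zero, zero_add]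
      refine tsum_congr fun m => ?_
      push_cast
      ring
    have hsD : ∀ m : ℕ, s * (hypCoeff a b c m * (m * s ^ (m - 1)))
        = m * hypCoeff a b c m * s ^ m := by
      rintro (_ | m)
      · simp
      · push_cast
        rw [pow_succ]
        ring
    have hw : Summable (fun m : ℕ => m * hypCoeff a b c m * s ^ m) :=
      ((hder s hs).mul_left s).congr hsD
    have hterm : ∀ m : ℕ, ((m : ℝ) + 1) * hypCoeff a b c (m + 1) * s ^ m
          - m * hypCoeff a b c m * s ^ m - (a + b - c) * (hypCoeff a b c m * s ^ m)
        = (a * b - c * (a + b - c)) / (c + m) * hypCoeff a b c m * s ^ m := fun m => by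
      linear_combination s ^ m * hypCoeff_diff (a := a) (b := b) hc m
    have hF := (summable_coeff ha hb hc hs).mul_left (a + b - c)
    rw [← tsum_congr hterm, (hv.sub hw).tsum_sub hF, hv.tsum_sub hw, tsum_mul_left,
      ← tsum_congr hsD, tsum_mul_left, ← hD]
    have hFe : hyp2F1 a b c s = ∑' m : ℕ, hypCoeff a b c m * s ^ m := rfl
    rw [hFe]
    ring

/-- The logarithmic derivative of `₂F₁(a,b;c;t²)`, where `(1-s)F'(s)/F(s) → a+b-c`. -/
lemma hyp_log_deriv {a b c : ℝ} (ha : 0 < a) (hb : 0 < b) (hc : 0 < c) (hδ : 0 ≤ a + b - c) :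
    Tendsto (fun t : ℝ => (1 - t ^ 2) * deriv (fun t : ℝ => hyp2F1 a b c (t ^ 2)) t
      / hyp2F1 a b c (t ^ 2)) (𝓝[Ioo 0 1] 1) (𝓝 (2 * (a + b - c))) := by
  have hpos := hypCoeff_pos ha hb hc
  have he : Tendsto (fun m : ℕ => (a * b - c * (a + b - c)) / (c + m)) atTop (𝓝 0) :=
    (tendsto_atTop_add_const_left _ c tendsto_natCast_atTop_atTop).const_div_atTop _
  have hsum := fun s hs => summable_coeff ha hb hc (s := s) hs
  have hns := hypCoeff_not_summable ha hb hc hδ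
  have hE := abel_ratio (fun m => (hpos m).le) he hsum hns
  have hF := tendsto_atTop_of_not_summable (fun m => (hpos m).le) hsum hns
  have hid : Tendsto (fun t : ℝ => t) (𝓝[Ioo 0 1] 1) (𝓝 1) := nhdsWithin_le_nhds
  have hsq : Tendsto (fun t : ℝ => t ^ 2) (𝓝[Ioo 0 1] 1) (𝓝[Ioo 0 1] 1) := by
    refine tendsto_nhdsWithin_iff.2 ⟨by simpa using hid.pow 2, ?_⟩
    filter_upwards [self_mem_nhdsWithin] with t ht
    exact ⟨pow_pos ht.1 2, pow_lt_one₀ ht.1.le ht.2 two_ne_zero⟩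
  have hlim := (hid.const_mul 2).mul ((hE.comp hsq).const_add (a + b - c))
  rw [mul_one, add_zero] at hlim
  refine hlim.congr' ?_
  filter_upwards [self_mem_nhdsWithin, hsq.eventually self_mem_nhdsWithin,
    (hF.comp hsq).eventually_gt_atTop 0] with t ht ht2 hFt
  obtain ⟨D, hD, hDeq⟩ := hyp_hasDerivAt ha hb hc ht2
  have hd : HasDerivAt (fun t : ℝ => hyp2F1 a b c (t ^ 2)) (D * (2 * t)) t :=
    (HasDerivAt.comp (h := fun t : ℝ => t ^ 2) t hD (hasDerivAt_pow 2 t)).congr_deriv (by simp)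
  have hFt' : 0 < hyp2F1 a b c (t ^ 2) := hFt
  rw [hd.deriv, ← mul_assoc, hDeq]
  change 2 * t * (a + b - c + _ / hyp2F1 a b c (t ^ 2)) = _
  field_simp

/-- For `n ≥ 3`, `1 ≤ k ≤ n-2` and `α ∈ (2-n,0)`, the quantity
`(1-t²)·g_{n,k,α}'(t)/g_{n,k,α}(t)` tends to `n-k-2` as `t → 1⁻`. -/
theorem gnk_log_derivative_limit (n k : ℕ) (hn : 3 ≤ n) (hk1 : 1 ≤ k) (hk2 : k ≤ n - 2)
    (α : ℝ) (hα : α ∈ Set.Ioo (2 - (n : ℝ)) 0) :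
    Filter.Tendsto (fun t : ℝ => (1 - t ^ 2) * deriv (gnk n k α) t / gnk n k α t)
      (nhdsWithin 1 (Set.Ioo (0 : ℝ) 1)) (nhds ((n : ℝ) - (k : ℝ) - 2)) := by
  have hk : (1 : ℝ) ≤ k := by exact_mod_cast hk1
  have hkn : (k : ℝ) + 2 ≤ n := by exact_mod_cast (by omega : k + 2 ≤ n)
  have h := hyp_log_deriv (a := ((n : ℝ) + α - 2) / 2) (b := -α / 2) (c := (k : ℝ) / 2)
    (by linarith [hα.1]) (by linarith [hα.2]) (by linarith) (by linarith)
  have hval : 2 * (((n : ℝ) + α - 2) / 2 + -α / 2 - (k : ℝ) / 2) = (n : ℝ) - k - 2 := by ring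
  rw [hval] at h
  exact h
end

section
/- Let n ≥ 3 and 1 ≤ k ≤ n-2 be integers, let t_{n,k} ∈ (0,1) be the unique zero of f_{n,k}, and let A_{n,k} be the set of α ∈ (2-n,0) such that g_{n,k,α}'(t_{n,k})/g_{n,k,α}(t_{n,k}) > ((n-2)·t_{n,k} - (k-1)·t_{n,k}⁻¹)/(1 - t_{n,k}²). Then: (i) α ∈ A_{n,k} if and only if 2-n-α ∈ A_{n,k}; (ii) A_{n,k} is order-convex, i.e. if α₁, α₂ ∈ A_{n,k} and α₁ ≤ α ≤ α₂ then α ∈ A_{n,k} (so A_{n,k} is an interval with midpoint (2-n)/2); and (iii) for every α ∈ A_{n,k} one has g_{n,k,α}'(t)/g_{n,k,α}(t) - ((n-2)·t - (k-1)·t⁻¹)/(1-t²) > 0 for all t ∈ (0, t_{n,k}]. -/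
/-- `f_{n,k}(t) := ₂F₁((n-1)/2, -1/2; k/2; t²)`. -/
noncomputable def fnk (n k : ℕ) (t : ℝ) : ℝ :=
  hyp2F1 (((n : ℝ) - 1) / 2) (-1 / 2) ((k : ℝ) / 2) (t ^ 2)

/-- The admissible set `A_{n,k}` of exponents `α ∈ (2-n,0)` satisfying the strict
subsolution inequality at the zero `t₀` of `f_{n,k}`. -/
def Ank (n k : ℕ) (t₀ : ℝ) : Set ℝ :=
  {α : ℝ | α ∈ Set.Ioo (2 - (n : ℝ)) 0 ∧
    deriv (gnk n k α) t₀ / gnk n k α t₀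
      > (((n : ℝ) - 2) * t₀ - ((k : ℝ) - 1) * t₀⁻¹) / (1 - t₀ ^ 2)}

/-! ### Real power series converging on `(-1, 1)` -/

/-- The power series with coefficients `u` converges absolutely on the open unit interval. -/
def ConvUnit (u : ℕ → ℝ) : Prop :=
  ∀ ρ : ℝ, 0 < ρ → ρ < 1 → Summable fun m => |u m| * ρ ^ m

/-- The sum of the power series with coefficients `u`. -/
noncomputable def psum (u : ℕ → ℝ) (s : ℝ) : ℝ := ∑' m, u m * s ^ m

/-- The coefficients of the termwise derivative of a power series. -/
def dcoef (u : ℕ → ℝ) (m : ℕ) : ℝ := ((m : ℝ) + 1) * u (m + 1)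

lemma ConvUnit.mul_nat {u : ℕ → ℝ} (hu : ConvUnit u) : ConvUnit fun m => (m : ℝ) * u m := by
  intro ρ h0 h1
  obtain ⟨σ, hσ1, hσ2⟩ := exists_between h1
  have hσ0 : 0 < σ := h0.trans hσ1
  have ht := tendsto_self_mul_const_pow_of_lt_one (r := ρ / σ) (by positivity)
    ((div_lt_one hσ0).2 hσ1)
  have hev : ∀ᶠ m : ℕ in Filter.atTop, (m : ℝ) * (ρ / σ) ^ m < 1 :=
    ht.eventually (gt_mem_nhds one_pos)
  refine Summable.of_norm_bounded_eventually_nat (hu σ hσ0 hσ2) ?_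
  filter_upwards [hev] with m hm
  have e : |(m : ℝ) * u m| * ρ ^ m = ((m : ℝ) * (ρ / σ) ^ m) * (|u m| * σ ^ m) := by
    rw [abs_mul, Nat.abs_cast, div_pow]
    field_simp
  rw [Real.norm_of_nonneg (by positivity), e]
  exact mul_le_of_le_one_left (by positivity) hm.le

lemma ConvUnit.dcoef {u : ℕ → ℝ} (hu : ConvUnit u) : ConvUnit (dcoef u) := by
  intro ρ h0 h1
  have h := ((summable_nat_add_iff 1).2 (hu.mul_nat ρ h0 h1)).mul_right ρ⁻¹
  refine h.congr fun m => ?_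
  rw [_root_.dcoef, pow_succ]
  push_cast
  field_simp

lemma ConvUnit.summable {u : ℕ → ℝ} (hu : ConvUnit u) {s : ℝ} (hs : |s| < 1) :
    Summable fun m => u m * s ^ m := by
  obtain ⟨ρ, h1, h2⟩ := exists_between hs
  have h0 : 0 < ρ := (abs_nonneg s).trans_lt h1
  refine Summable.of_norm_bounded (hu ρ h0 h2) fun m => ?_
  rw [norm_mul, norm_pow, Real.norm_eq_abs, Real.norm_eq_abs]
  gcongr

lemma ConvUnit.hasSum {u : ℕ → ℝ} (hu : ConvUnit u) {s : ℝ} (hs : |s| < 1) :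
    HasSum (fun m => u m * s ^ m) (psum u s) :=
  (hu.summable hs).hasSum

lemma ConvUnit.hasSum_mul_nat {u : ℕ → ℝ} (hu : ConvUnit u) {s : ℝ} (hs : |s| < 1) :
    HasSum (fun m : ℕ => ((m : ℝ) * u m) * s ^ m) (s * psum (_root_.dcoef u) s) := by
  have h := (hu.dcoef.hasSum hs).mul_left s
  rw [← hasSum_nat_add_iff' 1]
  simp only [Finset.range_one, Finset.sum_singleton, Nat.cast_zero, zero_mul, sub_zero]
  refine h.congr_fun fun m => ?_
  simp only [_root_.dcoef, pow_succ]
  push_cast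
  ring

lemma ConvUnit.hasDerivAt {u : ℕ → ℝ} (hu : ConvUnit u) {s : ℝ} (hs : |s| < 1) :
    HasDerivAt (psum u) (psum (_root_.dcoef u) s) s := by
  obtain ⟨ρ, h1, h2⟩ := exists_between hs
  have h0 : 0 < ρ := (abs_nonneg s).trans_lt h1
  have hbd : Summable fun m : ℕ => |(m : ℝ) * u m| * ρ ^ (m - 1) := by
    rw [← summable_nat_add_iff 1]
    refine (hu.dcoef ρ h0 h2).congr fun m => ?_
    simp [_root_.dcoef]
  have key := hasDerivAt_tsum_of_isPreconnected (𝕜 := ℝ) (F := ℝ)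
    (g := fun m x => u m * x ^ m) (g' := fun m x => u m * ((m : ℝ) * x ^ (m - 1)))
    (t := Set.Ioo (-ρ) ρ) (y₀ := s) (y := s) hbd isOpen_Ioo isPreconnected_Ioo
    (fun m y _ => (hasDerivAt_pow m y).const_mul (u m))
    (fun m y hy => by
      have : |y| ≤ ρ := (abs_lt.2 hy).le
      rw [← mul_assoc, mul_comm (u m), norm_mul, norm_pow, Real.norm_eq_abs, Real.norm_eq_abs]
      gcongr)
    (abs_lt.1 h1) (hu.summable hs) (abs_lt.1 h1)
  have e : (∑' m : ℕ, u m * ((m : ℝ) * s ^ (m - 1))) = psum (_root_.dcoef u) s := by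
    have hsm : Summable fun m : ℕ => u m * ((m : ℝ) * s ^ (m - 1)) := by
      rw [← summable_nat_add_iff 1]
      refine (hu.dcoef.summable hs).congr fun m => ?_
      simp only [_root_.dcoef, Nat.add_sub_cancel]
      push_cast
      ring
    rw [hsm.tsum_eq_zero_add, psum]
    simp only [Nat.cast_zero, zero_mul, mul_zero, zero_add, Nat.add_sub_cancel]
    refine tsum_congr fun m => ?_
    rw [_root_.dcoef]
    push_cast
    ring
  rw [e] at key
  exact key

/-! ### The hypergeometric series and its differential equation -/

/-- The coefficients of the Gauss hypergeometric series. -/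
noncomputable def hco (a b c : ℝ) (m : ℕ) : ℝ :=
  ((ascPochhammer ℝ m).eval a * (ascPochhammer ℝ m).eval b)
    / ((ascPochhammer ℝ m).eval c * (m.factorial : ℝ))

/-- The derivative of `s ↦ ₂F₁(a,b;c;s)`, as a power series. -/
noncomputable def dhyp (a b c : ℝ) : ℝ → ℝ := psum (dcoef (hco a b c))

lemma hyp2F1_eq_psum (a b c : ℝ) : hyp2F1 a b c = psum (hco a b c) := rfl

lemma hco_zero (a b c : ℝ) : hco a b c 0 = 1 := by simp [hco]

lemma hco_symm (a b c : ℝ) : hco a b c = hco b a c := by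
  funext m
  rw [hco, hco, mul_comm ((ascPochhammer ℝ m).eval a)]

lemma hco_pos {a b c : ℝ} (ha : 0 < a) (hb : 0 < b) (hc : 0 < c) (m : ℕ) : 0 < hco a b c m := by
  have h1 := ascPochhammer_pos m a ha
  have h2 := ascPochhammer_pos m b hb
  have h3 := ascPochhammer_pos m c hc
  have h4 : (0 : ℝ) < m.factorial := by exact_mod_cast m.factorial_pos
  rw [hco]
  positivity

lemma hco_succ (a b : ℝ) {c : ℝ} (hc : 0 < c) (m : ℕ) :
    ((m : ℝ) + 1) * (c + m) * hco a b c (m + 1) = (a + m) * (b + m) * hco a b c m := by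
  have h3 := (ascPochhammer_pos m c hc).ne'
  have h4 : (m.factorial : ℝ) ≠ 0 := by exact_mod_cast m.factorial_ne_zero
  have h5 : (c + m : ℝ) ≠ 0 := by positivity
  have h6 : ((m : ℝ) + 1) ≠ 0 := by positivity
  simp only [hco, ascPochhammer_succ_eval, Nat.factorial_succ]
  push_cast
  field_simp

lemma convUnit_hco (a b : ℝ) {c : ℝ} (hc : 0 < c) : ConvUnit (hco a b c) := by
  intro ρ h0 h1
  obtain ⟨σ, hσ1, hσ2⟩ := exists_between h1
  have hq : Filter.Tendsto (fun m : ℕ => ((a + m) / (1 + m)) * ((b + m) / (c + m)) * ρ)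
      Filter.atTop (nhds (1 * 1 * ρ)) := by
    refine Filter.Tendsto.mul_const _ (Filter.Tendsto.mul ?_ ?_)
    · simpa using tendsto_add_mul_div_add_mul_atTop_nhds a 1 1 (one_ne_zero (α := ℝ))
    · simpa using tendsto_add_mul_div_add_mul_atTop_nhds b c 1 (one_ne_zero (α := ℝ))
  have hev := (hq.abs).eventually (gt_mem_nhds
    (show |1 * 1 * ρ| < σ by rwa [one_mul, one_mul, abs_of_pos h0]))
  refine summable_of_ratio_norm_eventually_le hσ2 ?_
  filter_upwards [hev] with m hm
  have h5 : (0 : ℝ) < c + m := by positivity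
  have h6 : (0 : ℝ) < 1 + m := by positivity
  have e : hco a b c (m + 1) = ((a + m) / (1 + m)) * ((b + m) / (c + m)) * hco a b c m := by
    have := hco_succ a b hc m
    field_simp
    linarith
  have e2 : |hco a b c (m + 1)| * ρ ^ (m + 1)
      = |((a + m) / (1 + m)) * ((b + m) / (c + m)) * ρ| * (|hco a b c m| * ρ ^ m) := by
    rw [e, abs_mul _ (hco a b c m), abs_mul _ ρ, abs_of_pos h0]
    ring
  rw [Real.norm_of_nonneg (by positivity), Real.norm_of_nonneg (by positivity), e2]
  exact mul_le_mul_of_nonneg_right hm.le (by positivity)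

lemma hasDerivAt_hyp (a b : ℝ) {c s : ℝ} (hc : 0 < c) (hs : |s| < 1) :
    HasDerivAt (hyp2F1 a b c) (dhyp a b c s) s :=
  (convUnit_hco a b hc).hasDerivAt hs

/-- Gauss's differential equation
`s (1 - s) F'' + (c - (a + b + 1) s) F' - a b F = 0`. -/
lemma exists_hasDerivAt_dhyp (a b : ℝ) {c s : ℝ} (hc : 0 < c) (hs : |s| < 1) :
    ∃ y, HasDerivAt (dhyp a b c) y s ∧
      s * (1 - s) * y = a * b * hyp2F1 a b c s - (c - (a + b + 1) * s) * dhyp a b c s := by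
  have hC := convUnit_hco a b hc
  refine ⟨_, hC.dcoef.hasDerivAt hs, ?_⟩
  set y := psum (dcoef (dcoef (hco a b c))) s
  have h0 : HasSum (fun m => hco a b c m * s ^ m) (hyp2F1 a b c s) := hC.hasSum hs
  have h1 : HasSum (fun m => dcoef (hco a b c) m * s ^ m) (dhyp a b c s) := hC.dcoef.hasSum hs
  have h2 : HasSum (fun m : ℕ => ((m : ℝ) * hco a b c m) * s ^ m) (s * dhyp a b c s) :=
    hC.hasSum_mul_nat hs
  have h3 : HasSum (fun m : ℕ => ((m : ℝ) * dcoef (hco a b c) m) * s ^ m) (s * y) :=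
    hC.dcoef.hasSum_mul_nat hs
  have h4 : HasSum (fun m : ℕ => ((m : ℝ) * ((m : ℝ) * hco a b c m)) * s ^ m)
      (s * (s * y + dhyp a b c s)) := by
    have h := hC.mul_nat.hasSum_mul_nat hs
    have e : psum (dcoef fun m => (m : ℝ) * hco a b c m) s = s * y + dhyp a b c s := by
      refine HasSum.tsum_eq ((h3.add h1).congr_fun ?_)
      intro m
      simp only [dcoef]
      push_cast
      ring
    rwa [e] at h
  have hL := h3.add (h1.mul_left c)
  have hR := ((h0.mul_left (a * b)).add (h2.mul_left (a + b))).add h4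
  have := hL.unique (hR.congr_fun fun m => by
    simp only [dcoef]
    linear_combination (s ^ m) * hco_succ a b hc m)
  linear_combination this

/-! ### Bounds on the logarithmic derivative -/

lemma hyp_symm (a b c : ℝ) : hyp2F1 a b c = hyp2F1 b a c := by
  rw [hyp2F1_eq_psum, hyp2F1_eq_psum, hco_symm]

lemma abs_lt_one_of_mem {s : ℝ} (h0 : 0 ≤ s) (h1 : s < 1) : |s| < 1 := by
  rwa [abs_of_nonneg h0]

lemma hyp_pos {a b c s : ℝ} (ha : 0 < a) (hb : 0 < b) (hc : 0 < c) (h0 : 0 ≤ s) (h1 : s < 1) :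
    0 < hyp2F1 a b c s := by
  have hS := (convUnit_hco a b hc).summable (abs_lt_one_of_mem h0 h1)
  refine hS.tsum_pos (fun m => mul_nonneg (hco_pos ha hb hc m).le (pow_nonneg h0 m)) 0 ?_
  simp [hco_zero]

lemma dhyp_pos {a b c s : ℝ} (ha : 0 < a) (hb : 0 < b) (hc : 0 < c) (h0 : 0 ≤ s) (h1 : s < 1) :
    0 < dhyp a b c s := by
  have hS := (convUnit_hco a b hc).dcoef.summable (abs_lt_one_of_mem h0 h1)
  refine hS.tsum_pos (fun m => ?_) 0 ?_
  · have := hco_pos ha hb hc (m + 1)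
    rw [dcoef]
    positivity
  · simpa [dcoef] using hco_pos ha hb hc 1

/-- When `b ≤ c` the ratio of consecutive coefficients is at most that of `(1 - s) ^ (-a)`. -/
lemma dhyp_le {a b c s : ℝ} (ha : 0 < a) (hb : 0 < b) (hbc : b ≤ c) (h0 : 0 ≤ s) (h1 : s < 1) :
    (1 - s) * dhyp a b c s ≤ a * hyp2F1 a b c s := by
  have hc : 0 < c := hb.trans_le hbc
  have hs := abs_lt_one_of_mem h0 h1
  have hC := convUnit_hco a b hc
  have hF : HasSum (fun m => hco a b c m * s ^ m) (hyp2F1 a b c s) := hC.hasSum hs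
  have hD : HasSum (fun m => dcoef (hco a b c) m * s ^ m) (dhyp a b c s) := hC.dcoef.hasSum hs
  have hsD : HasSum (fun m : ℕ => ((m : ℝ) * hco a b c m) * s ^ m) (s * dhyp a b c s) :=
    hC.hasSum_mul_nat hs
  have := hasSum_le (fun m => ?_) hD ((hF.mul_left a).add hsD)
  · linarith
  · have h2 := hco_succ a b hc m
    have h3 := hco_pos ha hb hc m
    have h4 : (0 : ℝ) < c + m := by positivity
    have h5 : dcoef (hco a b c) m ≤ (a + m) * hco a b c m := by
      rw [dcoef]
      refine le_of_mul_le_mul_left ?_ h4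
      have : (b + m) * ((a + m) * hco a b c m) ≤ (c + m) * ((a + m) * hco a b c m) := by
        gcongr
      linarith
    have := mul_le_mul_of_nonneg_right h5 (pow_nonneg h0 m)
    linarith

lemma ascPochhammer_shift (x : ℝ) (m : ℕ) :
    (ascPochhammer ℝ m).eval (x + 1) * x = (ascPochhammer ℝ m).eval x * (x + m) := by
  induction m with
  | zero => simp
  | succ m ih =>
    rw [ascPochhammer_succ_eval, ascPochhammer_succ_eval]
    push_cast
    linear_combination (x + 1 + m) * ih

/-- A contiguous relation: it expresses `₂F₁(a+1,-1/2;c;·)` through `₂F₁(a,1/2;c;·)` and its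
derivative. -/
lemma contiguous (a : ℝ) {c s : ℝ} (hc : 0 < c) (hs : |s| < 1) :
    (c - 1 / 2) * a * hyp2F1 (a + 1) (-1 / 2) c s =
      (a + 1 / 2) * ((1 - s) * (s * dhyp a (1 / 2) c s))
        + a * ((c - 1 / 2) - (a + 1 / 2) * s) * hyp2F1 a (1 / 2) c s := by
  have hC := convUnit_hco a (1 / 2) hc
  have hf : HasSum (fun m => hco (a + 1) (-1 / 2) c m * s ^ m) (hyp2F1 (a + 1) (-1 / 2) c s) :=
    (convUnit_hco (a + 1) (-1 / 2) hc).hasSum hs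
  have hF : HasSum (fun m => hco a (1 / 2) c m * s ^ m) (hyp2F1 a (1 / 2) c s) := hC.hasSum hs
  have hsD : HasSum (fun m : ℕ => ((m : ℝ) * hco a (1 / 2) c m) * s ^ m)
      (s * dhyp a (1 / 2) c s) := hC.hasSum_mul_nat hs
  have hb : ∀ m : ℕ, (m : ℝ) - 1 / 2 ≠ 0 := by
    intro m h
    have h2 : ((2 * m : ℕ) : ℝ) = (1 : ℕ) := by push_cast; linarith
    have := Nat.cast_injective h2
    omega
  -- `hH` is the shifted series `s (s F' + a F)`, rewritten through the coefficient recurrence.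
  have hH : HasSum (fun m : ℕ => ((m : ℝ) * (c + m - 1) / ((m : ℝ) - 1 / 2) * hco a (1 / 2) c m)
      * s ^ m) (s * (s * dhyp a (1 / 2) c s + a * hyp2F1 a (1 / 2) c s)) := by
    rw [← hasSum_nat_add_iff' 1]
    simp only [Finset.range_one, Finset.sum_singleton, Nat.cast_zero, zero_mul, zero_div, sub_zero]
    refine ((hsD.add (hF.mul_left a)).mul_left s).congr_fun fun m => ?_
    have h1 := hco_succ a (1 / 2) hc m
    have h2 := hb (m + 1)
    have e : (((m + 1 : ℕ) : ℝ) * (c + (m + 1 : ℕ) - 1) / (((m + 1 : ℕ) : ℝ) - 1 / 2)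
        * hco a (1 / 2) c (m + 1)) = (a + m) * hco a (1 / 2) c m := by
      rw [div_mul_eq_mul_div, div_eq_iff h2]
      push_cast
      linear_combination h1
    rw [e, pow_succ]
    ring
  have hR := ((hsD.mul_left (a + 1 / 2)).add (hF.mul_left (a * (c - 1 / 2)))).sub
    (hH.mul_left (a + 1 / 2))
  have := (hf.mul_left ((c - 1 / 2) * a)).unique (hR.congr_fun fun m => ?_)
  · linear_combination this
  · have h2 := hb m
    have e1 := ascPochhammer_shift a m
    have e2 := ascPochhammer_shift (-1 / 2) m
    rw [show (-1 / 2 + 1 : ℝ) = 1 / 2 by norm_num] at e2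
    have e : a * hco (a + 1) (-1 / 2) c m
        = -(1 / 2) * (a + m) / ((m : ℝ) - 1 / 2) * hco a (1 / 2) c m := by
      have h3 := (ascPochhammer_pos m c hc).ne'
      have h4 : (m.factorial : ℝ) ≠ 0 := by exact_mod_cast m.factorial_ne_zero
      rw [div_mul_eq_mul_div, eq_div_iff h2, hco, hco]
      rw [mul_div_assoc', mul_div_assoc', div_mul_eq_mul_div]
      congr 1
      linear_combination (ascPochhammer ℝ m).eval (-1 / 2) * ((m : ℝ) - 1 / 2) * e1
        - (ascPochhammer ℝ m).eval a * (a + m) * e2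
    have e' : (c - 1 / 2) * a * hco (a + 1) (-1 / 2) c m = (c - 1 / 2) * (
      -(1 / 2) * (a + m) / ((m : ℝ) - 1 / 2) * hco a (1 / 2) c m) := by rw [← e]; ring
    rw [← mul_assoc, e']
    generalize hq : (m : ℝ) - 1 / 2 = q at h2 ⊢
    rw [show (m : ℝ) = q + 1 / 2 by linarith]
    field_simp
    ring

/-! ### Comparison of two hypergeometric functions with the same `a + b` -/

/-- Wronskian-type quantity comparing `F = ₂F₁(a,b;c;·)` with the power `F₀ ^ r` of
`F₀ = ₂F₁(a₀,b₀;c;·)`; the weight makes the hypergeometric equation self-adjoint. -/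
noncomputable def wron (a b a₀ b₀ c r s : ℝ) : ℝ :=
  s ^ c * (1 - s) ^ (a + b + 1 - c) * (hyp2F1 a₀ b₀ c s ^ (r - 1) *
    (dhyp a b c s * hyp2F1 a₀ b₀ c s - r * (hyp2F1 a b c s * dhyp a₀ b₀ c s)))

lemma hasDerivAt_wron {a b a₀ b₀ c r s : ℝ} (ha₀ : 0 < a₀) (hb₀ : 0 < b₀) (hc : 0 < c)
    (hab : a₀ + b₀ = a + b) (h0 : 0 < s) (h1 : s < 1) :
    HasDerivAt (wron a b a₀ b₀ c r)
      (s ^ c * (1 - s) ^ (a + b + 1 - c) * hyp2F1 a₀ b₀ c s ^ (r - 1) * hyp2F1 a b c s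
        * hyp2F1 a₀ b₀ c s * ((a * b - r * (a₀ * b₀)) / (s * (1 - s))
          - r * (r - 1) * (dhyp a₀ b₀ c s / hyp2F1 a₀ b₀ c s) ^ 2)) s := by
  have hs := abs_lt_one_of_mem h0.le h1
  have h1' : 0 < 1 - s := by linarith
  have hF0 := hyp_pos ha₀ hb₀ hc h0.le h1
  obtain ⟨y, hy, ey⟩ := exists_hasDerivAt_dhyp a b hc hs
  obtain ⟨z, hz, ez⟩ := exists_hasDerivAt_dhyp a₀ b₀ hc hs
  have d := hasDerivAt_hyp a b hc hs
  have d0 := hasDerivAt_hyp a₀ b₀ hc hs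
  have p1 := Real.hasDerivAt_rpow_const (x := s) (p := c) (Or.inl h0.ne')
  have p2 := ((hasDerivAt_id s).const_sub 1).rpow_const (p := a + b + 1 - c) (Or.inl h1'.ne')
  have p3 := d0.rpow_const (p := r - 1) (Or.inl hF0.ne')
  have key := (p1.mul p2).mul (p3.mul ((hy.mul d0).sub ((d.mul hz).const_mul r)))
  refine key.congr_deriv ?_
  simp only [id, Pi.mul_apply, Pi.sub_apply]
  rw [Real.rpow_sub_one h0.ne', Real.rpow_sub_one h1'.ne', Real.rpow_sub_one hF0.ne' (r - 1)]
  have ey' : y = (a * b * hyp2F1 a b c s - (c - (a + b + 1) * s) * dhyp a b c s) / (s * (1 - s)) := by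
    rw [eq_div_iff (by positivity)]; linarith
  have ez' : z = (a₀ * b₀ * hyp2F1 a₀ b₀ c s - (c - (a + b + 1) * s) * dhyp a₀ b₀ c s)
      / (s * (1 - s)) := by
    rw [eq_div_iff (by positivity), ← hab]; linarith
  rw [ey', ez']
  field_simp
  ring

lemma continuousOn_wron {a b a₀ b₀ c r s₁ : ℝ} (ha₀ : 0 < a₀) (hb₀ : 0 < b₀) (hc : 0 < c)
    (h1 : s₁ < 1) : ContinuousOn (wron a b a₀ b₀ c r) (Set.Icc 0 s₁) := by
  intro s hs
  have hs1 : s < 1 := hs.2.trans_lt h1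
  have hs' := abs_lt_one_of_mem hs.1 hs1
  obtain ⟨y, hy, -⟩ := exists_hasDerivAt_dhyp a b hc hs'
  obtain ⟨z, hz, -⟩ := exists_hasDerivAt_dhyp a₀ b₀ hc hs'
  have d := (hasDerivAt_hyp a b hc hs').continuousAt
  have d0 := (hasDerivAt_hyp a₀ b₀ hc hs').continuousAt
  have hF0 := hyp_pos ha₀ hb₀ hc hs.1 hs1
  refine ContinuousAt.continuousWithinAt ?_
  exact (((Real.continuousAt_rpow_const _ _ (Or.inr hc.le))).mul
    ((continuousAt_const.sub continuousAt_id).rpow_const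
      (Or.inl (sub_pos.2 hs1).ne'))).mul
    ((d0.rpow_const (Or.inl hF0.ne')).mul
      ((hy.continuousAt.mul d0).sub (continuousAt_const.mul (d.mul hz.continuousAt))))

lemma wron_zero (a b a₀ b₀ r : ℝ) {c : ℝ} (hc : 0 < c) : wron a b a₀ b₀ c r 0 = 0 := by
  simp [wron, Real.zero_rpow hc.ne']

/-- With `a + b` fixed, `F'/F` is a monotone function of `a b`. -/
lemma dhyp_mul_le {a b a₀ b₀ c s : ℝ} (ha : 0 < a) (hb : 0 < b) (ha₀ : 0 < a₀) (hb₀ : 0 < b₀)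
    (hc : 0 < c) (hab : a₀ + b₀ = a + b) (hle : a₀ * b₀ ≤ a * b) (h0 : 0 < s) (h1 : s < 1) :
    hyp2F1 a b c s * dhyp a₀ b₀ c s ≤ dhyp a b c s * hyp2F1 a₀ b₀ c s := by
  have hd : ∀ x ∈ interior (Set.Icc 0 s), HasDerivAt (wron a b a₀ b₀ c 1) _ x := fun x hx => by
    rw [interior_Icc] at hx
    exact hasDerivAt_wron ha₀ hb₀ hc hab hx.1 (hx.2.trans h1)
  have hm := monotoneOn_of_deriv_nonneg (convex_Icc 0 s) (continuousOn_wron ha₀ hb₀ hc h1)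
    (fun x hx => (hd x hx).differentiableAt.differentiableWithinAt)
    (fun x hx => by
      rw [(hd x hx).deriv]
      rw [interior_Icc] at hx
      have hx1 : x < 1 := hx.2.trans h1
      have hx1' : 0 < 1 - x := by linarith
      have hx0 := hx.1
      have := hyp_pos ha hb hc hx0.le hx1
      have := hyp_pos ha₀ hb₀ hc hx0.le hx1
      have : 0 ≤ a * b - 1 * (a₀ * b₀) := by linarith
      rw [sub_self, mul_zero, zero_mul, sub_zero]
      positivity)
  have h := hm (Set.left_mem_Icc.2 h0.le) (Set.right_mem_Icc.2 h0.le) h0.le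
  rw [wron_zero _ _ _ _ _ hc, wron, sub_self, Real.rpow_zero, one_mul, one_mul] at h
  have h1' : 0 < 1 - s := by linarith
  have := nonneg_of_mul_nonneg_right h (by positivity)
  linarith

/-- The comparison with `F₀ ^ r`, where `F₀ = ₂F₁((N-1)/2, 1/2; c; ·)` and `r = N / (N-1)`. The
hypothesis `N ≤ 4 a b (1 - s₁)` is what the bound `(1 - s) F₀' ≤ (N-1)/2 F₀` asks for. -/
lemma lt_dhyp_mul {a b c N s₁ : ℝ} (ha : 0 < a) (hb : 0 < b) (hc : 1 / 2 ≤ c) (hN : 1 < N)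
    (hab : 2 * (a + b) = N) (h0 : 0 < s₁) (h1 : s₁ < 1) (hle : N ≤ 4 * (a * b) * (1 - s₁)) :
    N / (N - 1) * (hyp2F1 a b c s₁ * dhyp ((N - 1) / 2) (1 / 2) c s₁)
      < dhyp a b c s₁ * hyp2F1 ((N - 1) / 2) (1 / 2) c s₁ := by
  have hc0 : 0 < c := by linarith
  have hN1 : 0 < N - 1 := by linarith
  have ha₀ : 0 < (N - 1) / 2 := by linarith
  have hb₀ : (0 : ℝ) < 1 / 2 := by norm_num
  set r := N / (N - 1) with hr
  have hd : ∀ x ∈ interior (Set.Icc 0 s₁), HasDerivAt (wron a b ((N - 1) / 2) (1 / 2) c r) _ x :=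
    fun x hx => by
      rw [interior_Icc] at hx
      exact hasDerivAt_wron ha₀ hb₀ hc0 (by linarith) hx.1 (hx.2.trans h1)
  have hm := strictMonoOn_of_deriv_pos (convex_Icc 0 s₁) (continuousOn_wron (a := a) (b := b) (r := r) ha₀ hb₀ hc0 h1)
    (fun x hx => by
      rw [(hd x hx).deriv]
      rw [interior_Icc] at hx
      have hx1 : x < 1 := hx.2.trans h1
      have hx1' : 0 < 1 - x := by linarith
      have hx0 := hx.1
      have hF := hyp_pos ha hb hc0 hx0.le hx1
      have hF0 := hyp_pos ha₀ hb₀ hc0 hx0.le hx1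
      have hD0 := dhyp_pos ha₀ hb₀ hc0 hx0.le hx1
      have hbd := dhyp_le ha₀ hb₀ hc hx0.le hx1
      refine mul_pos (by positivity) ?_
      set v := dhyp ((N - 1) / 2) (1 / 2) c x / hyp2F1 ((N - 1) / 2) (1 / 2) c x with hv
      have hv0 : 0 ≤ v := by positivity
      have hv1 : v ≤ (N - 1) / 2 / (1 - x) := by
        rw [hv, div_le_div_iff₀ hF0 hx1']
        linarith
      have hv2 : v ^ 2 ≤ ((N - 1) / 2 / (1 - x)) ^ 2 := by gcongr
      have hrr : 0 ≤ r * (r - 1) := by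
        have : r - 1 = 1 / (N - 1) := by rw [hr]; field_simp; ring
        rw [this]
        positivity
      have h3 := mul_le_mul_of_nonneg_left hv2 hrr
      have e : (a * b - r * ((N - 1) / 2 * (1 / 2))) / (x * (1 - x))
          - r * (r - 1) * ((N - 1) / 2 / (1 - x)) ^ 2
          = (4 * (a * b) * (1 - x) - N) / (4 * x * (1 - x) ^ 2) := by
        rw [hr]
        field_simp
        ring
      have hab0 : 0 < a * b := mul_pos ha hb
      have h4 : 0 < 4 * (a * b) * (1 - x) - N := by nlinarith [hx.2]
      have h5 : 0 < (4 * (a * b) * (1 - x) - N) / (4 * x * (1 - x) ^ 2) := by positivity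
      linarith)
  have h := hm (Set.left_mem_Icc.2 h0.le) (Set.right_mem_Icc.2 h0.le) h0
  rw [wron_zero _ _ _ _ _ hc0, wron] at h
  have h1' : 0 < 1 - s₁ := by linarith
  have hF0 := hyp_pos ha₀ hb₀ hc0 h0.le h1
  have h5 := pos_of_mul_pos_right h (by positivity)
  have := pos_of_mul_pos_right h5 (by positivity)
  linarith

/-! ### The sign of the Riccati quantity -/

/-- The Riccati quantity of the theorem for `F = ₂F₁(a,b;c;·)`, cleared of denominators and written
in the variable `s = t²`, with `N = n - 2` and `A = k - 1`. -/
noncomputable def ricc (N A a b c s : ℝ) : ℝ :=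
  2 * (s * (1 - s)) * dhyp a b c s - (N * s - A) * hyp2F1 a b c s

/-- The quadratic whose sign governs the monotonicity of `ricc / √(s(1-s))`: up to the factor
`s (1 - s)` it is `4ab - A/s - (N-A)/(1-s)`. -/
def quad (N A p s : ℝ) : ℝ := 4 * p * (s * (1 - s)) - A * (1 - s) - (N - A) * s

lemma hasDerivAt_ricc_div {N A a b c s : ℝ} (hc : 0 < c) (hcA : 2 * c = A + 1)
    (hab : 2 * (a + b) = N) (h0 : 0 < s) (h1 : s < 1) :
    HasDerivAt (fun x => ricc N A a b c x / √(x * (1 - x)))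
      (hyp2F1 a b c s / (2 * (s * (1 - s)) * √(s * (1 - s))) * quad N A (a * b) s) s := by
  have hs := abs_lt_one_of_mem h0.le h1
  have h1' : 0 < 1 - s := by linarith
  have hp : 0 < s * (1 - s) := mul_pos h0 h1'
  have hq := Real.sqrt_pos.2 hp
  obtain ⟨y, hy, ey⟩ := exists_hasDerivAt_dhyp a b hc hs
  have d := hasDerivAt_hyp a b hc hs
  have dp : HasDerivAt (fun x : ℝ => x * (1 - x)) (1 * (1 - s) + s * (-1)) s :=
    (hasDerivAt_id s).mul ((hasDerivAt_id s).const_sub 1)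
  have dl : HasDerivAt (fun x : ℝ => N * x - A) (N * 1) s :=
    ((hasDerivAt_id s).const_mul N).sub_const A
  have key := (((dp.const_mul 2).mul hy).sub (dl.mul d)).div (dp.sqrt hp.ne') hq.ne'
  refine key.congr_deriv ?_
  simp only [Pi.mul_apply, Pi.sub_apply, quad]
  have ey' : y = (a * b * hyp2F1 a b c s - (c - (a + b + 1) * s) * dhyp a b c s)
      / (s * (1 - s)) := by
    rw [eq_div_iff hp.ne']; linarith
  have hc' : c = (A + 1) / 2 := by linarith
  have hN : N = 2 * (a + b) := hab.symm
  generalize hyp2F1 a b c s = F at *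
  generalize dhyp a b c s = F' at *
  generalize hr : √(s * (1 - s)) = ρ at *
  have hsq : ρ ^ 2 = s * (1 - s) := by rw [← hr, Real.sq_sqrt hp.le]
  rw [ey', hc', hN, hsq]
  have hsq' : ρ * ρ = s * (1 - s) := by rw [← hsq, sq]
  field_simp
  rw [hsq]
  ring

/-- `ricc / √(s(1-s))` increases where `quad ≥ 0`. -/
lemma ricc_pos_of_quad_nonneg {N A a b c s x : ℝ} (ha : 0 < a) (hb : 0 < b) (hc : 0 < c)
    (hcA : 2 * c = A + 1) (hab : 2 * (a + b) = N) (h0 : 0 < s) (hsx : s ≤ x) (h1 : x < 1)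
    (hq : ∀ y, s ≤ y → y ≤ x → 0 ≤ quad N A (a * b) y) (hs : 0 < ricc N A a b c s) :
    0 < ricc N A a b c x := by
  have hd := fun y (hy : y ∈ Set.Icc s x) =>
    hasDerivAt_ricc_div (a := a) (b := b) hc hcA hab (h0.trans_le hy.1) (hy.2.trans_lt h1)
  have hm := monotoneOn_of_deriv_nonneg (convex_Icc s x)
    (fun y hy => (hd y hy).continuousAt.continuousWithinAt)
    (fun y hy => (hd y (interior_subset hy)).differentiableAt.differentiableWithinAt)
    (fun y hy => by
      have hy := interior_subset hy
      rw [(hd y hy).deriv]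
      have hy0 := h0.trans_le hy.1
      have hy1 := hy.2.trans_lt h1
      have : 0 < 1 - y := by linarith
      have := hyp_pos ha hb hc hy0.le hy1
      exact mul_nonneg (by positivity) (hq y hy.1 hy.2))
  have h := hm (Set.left_mem_Icc.2 hsx) (Set.right_mem_Icc.2 hsx) hsx
  have h2 : 0 < √(s * (1 - s)) := Real.sqrt_pos.2 (mul_pos h0 (by linarith))
  have h3 : 0 < √(x * (1 - x)) := Real.sqrt_pos.2 (mul_pos (by linarith) (by linarith))
  exact (div_pos_iff_of_pos_right h3).1 ((div_pos hs h2).trans_le h)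

/-- `ricc / √(s(1-s))` decreases where `quad ≤ 0`. -/
lemma ricc_pos_of_quad_nonpos {N A a b c s x : ℝ} (ha : 0 < a) (hb : 0 < b) (hc : 0 < c)
    (hcA : 2 * c = A + 1) (hab : 2 * (a + b) = N) (h0 : 0 < s) (hsx : s ≤ x) (h1 : x < 1)
    (hq : ∀ y, s ≤ y → y ≤ x → quad N A (a * b) y ≤ 0) (hx : 0 < ricc N A a b c x) :
    0 < ricc N A a b c s := by
  have hd := fun y (hy : y ∈ Set.Icc s x) =>
    hasDerivAt_ricc_div (a := a) (b := b) hc hcA hab (h0.trans_le hy.1) (hy.2.trans_lt h1)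
  have hm := antitoneOn_of_deriv_nonpos (convex_Icc s x)
    (fun y hy => (hd y hy).continuousAt.continuousWithinAt)
    (fun y hy => (hd y (interior_subset hy)).differentiableAt.differentiableWithinAt)
    (fun y hy => by
      have hy := interior_subset hy
      rw [(hd y hy).deriv]
      have hy0 := h0.trans_le hy.1
      have hy1 := hy.2.trans_lt h1
      have : 0 < 1 - y := by linarith
      have := hyp_pos ha hb hc hy0.le hy1
      exact mul_nonpos_of_nonneg_of_nonpos (by positivity) (hq y hy.1 hy.2))
  have h := hm (Set.left_mem_Icc.2 hsx) (Set.right_mem_Icc.2 hsx) hsx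
  have h2 : 0 < √(s * (1 - s)) := Real.sqrt_pos.2 (mul_pos h0 (by linarith))
  have h3 : 0 < √(x * (1 - x)) := Real.sqrt_pos.2 (mul_pos (by linarith) (by linarith))
  exact (div_pos_iff_of_pos_right h2).1 ((div_pos hx h3).trans_le h)

/-- The value of `A/y + (N-A)/(1-y)` at `y = x ≥ 1/2` is at least its value at any earlier point
`y = s` with `A/N ≤ s ≤ x`. -/
lemma quad_nonpos_of_le {N A p s x : ℝ} (hA : 0 ≤ A) (h0 : 0 < s) (hsx : s ≤ x) (h1 : x < 1)
    (hx : 1 / 2 ≤ x) (hs : A ≤ N * s) (hq : quad N A p s ≤ 0) : quad N A p x ≤ 0 := by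
  have h1' : 0 < 1 - x := by linarith
  have h2' : 0 < 1 - s := by linarith
  have hx0 : 0 < x := by linarith
  have hk : A * (1 - s) * (1 - x) ≤ (N - A) * s * x := by
    have e1 : A * (1 - s) * (1 - x) ≤ A * (1 - s) * x :=
      mul_le_mul_of_nonneg_left (by linarith) (by positivity)
    have e2 : A * (1 - s) * x ≤ (N - A) * s * x :=
      mul_le_mul_of_nonneg_right (by linarith) hx0.le
    linarith
  have h3 := mul_nonneg (sub_nonneg.2 hsx) (sub_nonneg.2 hk)
  have h4 := mul_nonpos_of_nonneg_of_nonpos (mul_pos hx0 h1').le hq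
  have h5 : (s * (1 - s)) * quad N A p x ≤ 0 := by
    rw [quad] at *
    linarith
  exact nonpos_of_mul_nonpos_right h5 (mul_pos h0 h2')

lemma ricc_pos_of_le {N A a b c s : ℝ} (ha : 0 < a) (hb : 0 < b) (hc : 0 < c) (h0 : 0 < s)
    (h1 : s < 1) (hs : N * s ≤ A) : 0 < ricc N A a b c s := by
  have h1' : 0 < 1 - s := by linarith
  have h2 := dhyp_pos ha hb hc h0.le h1
  have h3 := hyp_pos ha hb hc h0.le h1
  have h4 : 0 < 2 * (s * (1 - s)) * dhyp a b c s := by positivity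
  have h5 := mul_nonneg (sub_nonneg.2 hs) h3.le
  rw [ricc]
  linarith

/-- Up to the zero of `₂F₁((N+1)/2, -1/2; c; ·)`, the contiguous relation bounds the logarithmic
derivative of `₂F₁((N-1)/2, 1/2; c; ·)` from below by `(N-1)/N` times the required quantity, and
the comparison with its power of exponent `N/(N-1)` restores the missing factor. -/
lemma ricc_pos_of_barrier {N A a b c s : ℝ} (ha : 0 < a) (hb : 0 < b) (hA : 0 ≤ A)
    (hcA : 2 * c = A + 1) (hab : 2 * (a + b) = N) (h0 : 0 < s) (h1 : s < 1)
    (hf : 0 ≤ hyp2F1 ((N + 1) / 2) (-1 / 2) c s) (hle : N ≤ 4 * (a * b) * (1 - s)) :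
    0 < ricc N A a b c s := by
  have hc : 0 < c := by linarith
  have hN0 : 0 < N := by linarith
  have hab0 : 0 < a * b := mul_pos ha hb
  -- By the inequality of means `4ab ≤ N²/4`, so the hypothesis on `s` forces `N > 4`.
  have hN : 1 < N := by
    have h2 : 4 * (a * b) ≤ N ^ 2 / 4 := by
      rw [← hab]; nlinarith [sq_nonneg (a - b)]
    have h3 : 4 * (a * b) * (1 - s) ≤ 4 * (a * b) := mul_le_of_le_one_right (by positivity) (by linarith)
    nlinarith
  have hN1 : 0 < N - 1 := by linarith
  have hcomp := lt_dhyp_mul (c := c) ha hb (by linarith) hN hab h0 h1 hle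
  have hcon := contiguous ((N - 1) / 2) hc (abs_lt_one_of_mem h0.le h1)
  rw [show (N - 1) / 2 + 1 = (N + 1) / 2 by ring, show (N - 1) / 2 + 1 / 2 = N / 2 by ring,
    show c - 1 / 2 = A / 2 by linarith] at hcon
  have hF := hyp_pos ha hb hc h0.le h1
  have hF0 := hyp_pos (half_pos hN1) (by norm_num : (0 : ℝ) < 1 / 2) hc h0.le h1
  have h1' : 0 < 1 - s := by linarith
  have hL : 0 ≤ A / 2 * ((N - 1) / 2) * hyp2F1 ((N + 1) / 2) (-1 / 2) c s := by positivity
  rw [hcon] at hL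
  rw [ricc]
  generalize hyp2F1 a b c s = F at *
  generalize hyp2F1 ((N - 1) / 2) (1 / 2) c s = F₀ at *
  refine pos_of_mul_pos_left (b := F₀) ?_ hF0.le
  have h2 := mul_nonneg hL (by positivity : 0 ≤ 4 * F / (N - 1))
  have e : (N / 2 * ((1 - s) * (s * dhyp ((N - 1) / 2) (1 / 2) c s))
      + (N - 1) / 2 * (A / 2 - N / 2 * s) * F₀) * (4 * F / (N - 1))
      = 2 * (s * (1 - s)) * (N / (N - 1) * (F * dhyp ((N - 1) / 2) (1 / 2) c s))
        + (A - N * s) * F * F₀ := by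
    field_simp
    ring
  rw [e] at h2
  have h3 := mul_pos (mul_pos h0 h1') (sub_pos.2 hcomp)
  linarith

/-- If the Riccati quantity is positive at a point up to which `₂F₁((N+1)/2, -1/2; c; ·)` is
nonnegative, then it is positive at all earlier points. -/
lemma ricc_pos_of_ricc_pos {N A a b c s s₀ : ℝ} (ha : 0 < a) (hb : 0 < b) (hA : 0 ≤ A)
    (hcA : 2 * c = A + 1) (hab : 2 * (a + b) = N) (h0 : 0 < s) (hs : s ≤ s₀) (h1 : s₀ < 1)
    (hf : ∀ x, 0 < x → x ≤ s₀ → 0 ≤ hyp2F1 ((N + 1) / 2) (-1 / 2) c x)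
    (hr : 0 < ricc N A a b c s₀) : 0 < ricc N A a b c s := by
  have hc : 0 < c := by linarith
  have hN0 : 0 < N := by linarith
  have hab0 : 0 < a * b := mul_pos ha hb
  have hs1 : s < 1 := hs.trans_lt h1
  rcases le_or_gt (N * s) A with h2 | h2
  · exact ricc_pos_of_le ha hb hc h0 hs1 h2
  rcases le_or_gt N (4 * (a * b) * (1 - s)) with h3 | h3
  · exact ricc_pos_of_barrier ha hb hA hcA hab h0 hs1 (hf s h0 hs) h3
  rcases lt_or_ge s (1 / 2) with h4 | h4
  · -- On `[s, 1/2]` one has `4ab < N/(1-y) ≤ A/y + (N-A)/(1-y)`.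
    have hq : ∀ y, s ≤ y → y ≤ 1 / 2 → quad N A (a * b) y ≤ 0 := by
      intro y hy hy2
      have e1 : 4 * (a * b) * (1 - y) ≤ N := by nlinarith
      have e2 := mul_le_mul_of_nonneg_left e1 (h0.le.trans hy)
      have e3 := mul_nonneg hA (by linarith : 0 ≤ 1 - 2 * y)
      rw [quad]
      linarith
    refine ricc_pos_of_quad_nonpos ha hb hc hcA hab h0 hs h1 (fun y hy hy2 => ?_) hr
    rcases le_total y (1 / 2) with h5 | h5
    · exact hq y hy h5
    · exact quad_nonpos_of_le hA (by norm_num) h5 (hy2.trans_lt h1) h5 (by nlinarith)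
        (hq _ h4.le le_rfl)
  · rcases le_or_gt (quad N A (a * b) s) 0 with h5 | h5
    · exact ricc_pos_of_quad_nonpos ha hb hc hcA hab h0 hs h1 (fun y hy hy2 =>
        quad_nonpos_of_le hA h0 hy (hy2.trans_lt h1) (h4.trans hy) h2.le h5) hr
    · -- Here the quantity increases on `[max (1/2) (A/N), s]`.
      have hq : ∀ y, 1 / 2 ≤ y → A ≤ N * y → y ≤ s → 0 ≤ quad N A (a * b) y := by
        intro y hy hy2 hy3
        by_contra! hneg
        exact h5.not_ge
          (quad_nonpos_of_le hA (by linarith) hy3 hs1 h4 hy2 hneg.le)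
      rcases le_total A (N * (1 / 2)) with h6 | h6
      · refine ricc_pos_of_quad_nonneg ha hb hc hcA hab (by norm_num) h4 hs1
          (fun y hy hy2 => hq y hy (by nlinarith) hy2) ?_
        have h7 := hq (1 / 2) le_rfl h6 h4
        rw [quad] at h7
        exact ricc_pos_of_barrier ha hb hA hcA hab (by norm_num) (by norm_num)
          (hf _ (by norm_num) (h4.trans hs)) (by linarith)
      · have h7 : N * (A / N) = A := mul_div_cancel₀ A hN0.ne'
        have h8 : 1 / 2 ≤ A / N := by rw [le_div_iff₀ hN0]; linarith
        have h9 : A / N ≤ s := by rw [div_le_iff₀ hN0]; linarith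
        exact ricc_pos_of_quad_nonneg ha hb hc hcA hab (by linarith) h9 hs1
          (fun y hy hy2 => hq y (h8.trans hy) (by nlinarith) hy2)
          (ricc_pos_of_le ha hb hc (by linarith) (by linarith) h7.le)

/-- For fixed `a + b`, positivity of the Riccati quantity is inherited by larger `a b`. -/
lemma ricc_pos_of_mul_le {N A a b a₀ b₀ c s : ℝ} (ha : 0 < a) (hb : 0 < b) (ha₀ : 0 < a₀)
    (hb₀ : 0 < b₀) (hc : 0 < c) (hab : a₀ + b₀ = a + b) (hle : a₀ * b₀ ≤ a * b)
    (h0 : 0 < s) (h1 : s < 1) (hr : 0 < ricc N A a₀ b₀ c s) : 0 < ricc N A a b c s := by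
  have h := dhyp_mul_le ha hb ha₀ hb₀ hc hab hle h0 h1
  have hF := hyp_pos ha hb hc h0.le h1
  have hF0 := hyp_pos ha₀ hb₀ hc h0.le h1
  have h1' : 0 < 1 - s := by linarith
  have h2 := mul_pos hF hr
  have h3 := mul_nonneg (mul_pos h0 h1').le (sub_nonneg.2 h)
  rw [ricc] at *
  refine pos_of_mul_pos_left (b := hyp2F1 a₀ b₀ c s) ?_ hF0.le
  linarith

/-! ### Translation to the variable `t` -/

lemma gnk_riccati_pos_iff {n k : ℕ} (hk1 : 1 ≤ k) {α t : ℝ} (hα : α ∈ Set.Ioo (2 - (n : ℝ)) 0)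
    (h0 : 0 < t) (h1 : t < 1) :
    0 < deriv (gnk n k α) t / gnk n k α t
        - (((n : ℝ) - 2) * t - ((k : ℝ) - 1) * t⁻¹) / (1 - t ^ 2) ↔
      0 < ricc ((n : ℝ) - 2) ((k : ℝ) - 1) (((n : ℝ) + α - 2) / 2) (-α / 2) ((k : ℝ) / 2)
        (t ^ 2) := by
  have hc : (0 : ℝ) < (k : ℝ) / 2 := by
    have : (0 : ℝ) < k := by exact_mod_cast hk1
    positivity
  have ha : 0 < ((n : ℝ) + α - 2) / 2 := by linarith [hα.1]
  have hb : 0 < -α / 2 := by linarith [hα.2]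
  have ht2 : t ^ 2 < 1 := by nlinarith
  have h1' : 0 < 1 - t ^ 2 := by linarith
  have hF := hyp_pos ha hb hc (sq_nonneg t) ht2
  have hd : HasDerivAt (gnk n k α) _ t :=
    (hasDerivAt_hyp _ _ hc (abs_lt_one_of_mem (sq_nonneg t) ht2)).comp (h := fun t : ℝ => t ^ 2) t
      (hasDerivAt_pow 2 t)
  rw [hd.deriv, gnk, ricc]
  have e : ∀ F F' N A : ℝ, 0 < F → F' * ((2 : ℕ) * t ^ (2 - 1)) / F
      - (N * t - A * t⁻¹) / (1 - t ^ 2)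
      = (2 * (t ^ 2 * (1 - t ^ 2)) * F' - (N * t ^ 2 - A) * F) / (t * (1 - t ^ 2) * F) := by
    intro F F' N A hF
    push_cast
    field_simp
  rw [e _ _ _ _ hF]
  exact div_pos_iff_of_pos_right (by positivity)

lemma mem_Ank_iff {n k : ℕ} (hk1 : 1 ≤ k) {α t : ℝ} (h0 : 0 < t) (h1 : t < 1) :
    α ∈ Ank n k t ↔ α ∈ Set.Ioo (2 - (n : ℝ)) 0 ∧
      0 < ricc ((n : ℝ) - 2) ((k : ℝ) - 1) (((n : ℝ) + α - 2) / 2) (-α / 2) ((k : ℝ) / 2)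
        (t ^ 2) := by
  rw [Ank, Set.mem_ofPred_eq]
  refine and_congr_right fun hα => ?_
  rw [← gnk_riccati_pos_iff hk1 hα h0 h1, sub_pos, gt_iff_lt]

lemma ricc_symm (N A a b c s : ℝ) : ricc N A a b c s = ricc N A b a c s := by
  rw [ricc, ricc, hyp_symm, dhyp, dhyp, hco_symm]

/-- `₂F₁(·, -1/2; c; s)` takes the value `1` at `0`, so it is nonnegative before its only zero. -/
lemma hyp_nonneg_of_unique_zero {n k : ℕ} (hk1 : 1 ≤ k) {t₀ : ℝ} (ht₀ : t₀ ∈ Set.Ioo (0 : ℝ) 1)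
    (huniq : ∀ t ∈ Set.Ioo (0 : ℝ) 1, fnk n k t = 0 → t = t₀)
    {x : ℝ} (hx0 : 0 < x) (hx : x ≤ t₀ ^ 2) :
    0 ≤ hyp2F1 (((n : ℝ) - 1) / 2) (-1 / 2) ((k : ℝ) / 2) x := by
  have hc : (0 : ℝ) < (k : ℝ) / 2 := by
    have : (0 : ℝ) < k := by exact_mod_cast hk1
    positivity
  by_contra! hneg
  have hx1 : x < 1 := by nlinarith [ht₀.1, ht₀.2]
  have hcont : ContinuousOn (hyp2F1 (((n : ℝ) - 1) / 2) (-1 / 2) ((k : ℝ) / 2)) (Set.Icc 0 x) :=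
    fun y hy => (hasDerivAt_hyp _ _ hc (abs_lt_one_of_mem hy.1
      (hy.2.trans_lt hx1))).continuousAt.continuousWithinAt
  have hzero' : hyp2F1 (((n : ℝ) - 1) / 2) (-1 / 2) ((k : ℝ) / 2) 0 = 1 := by
    rw [hyp2F1_eq_psum, psum, tsum_eq_single 0 (by intro m hm; simp [hm])]
    simp [hco_zero]
  obtain ⟨y, hy, hy0⟩ := intermediate_value_Icc' hx0.le hcont
    (show (0 : ℝ) ∈ Set.Icc _ _ from ⟨hneg.le, by rw [hzero']; exact zero_le_one⟩)
  have hy1 : y ≠ 0 := by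
    rintro rfl
    rw [hzero'] at hy0
    exact one_ne_zero hy0
  have hyx : y ≠ x := by
    rintro rfl
    exact hneg.ne hy0
  have hypos : 0 < y := lt_of_le_of_ne hy.1 hy1.symm
  have hylt : y < x := lt_of_le_of_ne hy.2 hyx
  have hs := huniq (√y) ⟨Real.sqrt_pos.2 hypos, by
    rw [Real.sqrt_lt' one_pos]; linarith⟩ (by rw [fnk, Real.sq_sqrt hypos.le, hy0])
  rw [← hs, Real.sq_sqrt hypos.le] at hx
  linarith

/-- `A_{n,k}` is symmetric under `α ↔ 2-n-α`, is order-convex (hence an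
interval with midpoint `(2-n)/2`), and for any `α ∈ A_{n,k}` the Riccati quantity
`g'/g - ((n-2)t - (k-1)t⁻¹)/(1-t²)` is positive on all of `(0, t₀]`. -/
theorem Ank_interval_and_positivity
    (n k : ℕ) (hn : 3 ≤ n) (hk1 : 1 ≤ k) (hk2 : k ≤ n - 2)
    (t₀ : ℝ) (ht₀ : t₀ ∈ Set.Ioo (0 : ℝ) 1) (hzero : fnk n k t₀ = 0)
    (huniq : ∀ t ∈ Set.Ioo (0 : ℝ) 1, fnk n k t = 0 → t = t₀) :
    (∀ α : ℝ, α ∈ Ank n k t₀ ↔ 2 - (n : ℝ) - α ∈ Ank n k t₀) ∧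
    (∀ α₁ ∈ Ank n k t₀, ∀ α₂ ∈ Ank n k t₀, ∀ α : ℝ,
        α₁ ≤ α → α ≤ α₂ → α ∈ Ank n k t₀) ∧
    (∀ α ∈ Ank n k t₀, ∀ t ∈ Set.Ioc (0 : ℝ) t₀,
        0 < deriv (gnk n k α) t / gnk n k α t
          - (((n : ℝ) - 2) * t - ((k : ℝ) - 1) * t⁻¹) / (1 - t ^ 2)) := by
  have ht0 := ht₀.1
  have ht1 := ht₀.2
  have hs0 : 0 < t₀ ^ 2 := by positivity
  have hs1 : t₀ ^ 2 < 1 := by nlinarith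
  have hc : (0 : ℝ) < (k : ℝ) / 2 := by
    have : (0 : ℝ) < k := by exact_mod_cast hk1
    positivity
  have hk1' : (1 : ℝ) ≤ k := by exact_mod_cast hk1
  refine ⟨fun α => ?_, fun α₁ h₁ α₂ h₂ α hα₁ hα₂ => ?_, fun α hα t ht => ?_⟩
  · rw [mem_Ank_iff hk1 ht0 ht1, mem_Ank_iff hk1 ht0 ht1,
      ricc_symm _ _ (((n : ℝ) + α - 2) / 2)]
    rw [show ((n : ℝ) + (2 - n - α) - 2) / 2 = -α / 2 by ring,
      show -(2 - (n : ℝ) - α) / 2 = ((n : ℝ) + α - 2) / 2 by ring]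
    refine and_congr_left fun _ => ?_
    rw [Set.mem_Ioo, Set.mem_Ioo]
    constructor <;> rintro ⟨h, h'⟩ <;> constructor <;> linarith
  · rw [mem_Ank_iff hk1 ht0 ht1] at h₁ h₂ ⊢
    obtain ⟨⟨l₁, u₁⟩, r₁⟩ := h₁
    obtain ⟨⟨l₂, u₂⟩, r₂⟩ := h₂
    refine ⟨⟨by linarith, by linarith⟩, ?_⟩
    -- `ab` is a concave function of `α`, hence at least its minimum over the two endpoints.
    rcases le_total (α + α₁) (2 - (n : ℝ)) with h | h
    · exact ricc_pos_of_mul_le (by linarith) (by linarith) (by linarith) (by linarith) hc (by ring)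
        (by nlinarith) hs0 hs1 r₁
    · exact ricc_pos_of_mul_le (by linarith) (by linarith) (by linarith) (by linarith) hc (by ring)
        (by nlinarith) hs0 hs1 r₂
  · rw [mem_Ank_iff hk1 ht0 ht1] at hα
    have htt : t ^ 2 ≤ t₀ ^ 2 := by nlinarith [ht.1, ht.2]
    rw [gnk_riccati_pos_iff hk1 hα.1 ht.1 (ht.2.trans_lt ht1)]
    refine ricc_pos_of_ricc_pos (by linarith [hα.1.1]) (by linarith [hα.1.2]) (by linarith)
      (by ring) (by ring) (pow_pos ht.1 2) htt hs1 (fun x hx hx2 => ?_) hα.2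
    rw [show (n : ℝ) - 2 + 1 = n - 1 by ring]
    exact hyp_nonneg_of_unique_zero hk1 ht₀ huniq hx hx2
end
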